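/- arXiv:2008.08644 — 3 statements merged into one kernel-verified Lean document; each statement's English description precedes it below -/
import Mathlib

section
/- Let 0 < γ < δ and s ∈ ℕ with s ≥ 1. Then |(1/3)·A(γ^s, δ^s) + (2/3)·A(γ,δ)^s − L_s(γ,δ)^s| ≤ (5(δ−γ)/72)·s·(γ^(s−1) + δ^(s−1)). -/
/-!
Integrating by parts on each half of `[a, b]` against the kernel `x - c`, where `c` lies at one
sixth of the length of `[a, b]` from the outer endpoint, turns the error of Simpson's rule into an
integral of `f'`. If `‖f'‖` is convex it lies below its chord, and integrating `|x - c|` against an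
affine function is explicit: the two halves contribute the value of the chord at their nodes `c`
with the same weight `5 (b - a)² / 72`, while the slope terms cancel by symmetry. For `f x = x ^ s`
the function `‖f'‖` is `s * |x| ^ (s - 1)`.
-/

open Set MeasureTheory intervalIntegral
open scoped Interval

section Chord

variable {𝕜 : Type*} [Field 𝕜] [LinearOrder 𝕜] [IsStrictOrderedRing 𝕜]

theorem le_add_slope_mul_sub_of_convexOn {t : Set 𝕜} {g : 𝕜 → 𝕜} {x y z : 𝕜}
    (hg : ConvexOn 𝕜 t g) (hx : x ∈ t) (hz : z ∈ t) (hxy : x ≤ y) (hyz : y ≤ z) :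
    g y ≤ g x + slope g x z * (y - x) := by
  rcases hxy.eq_or_lt with rfl | hxy
  · simp
  have hy : y ∈ t := hg.1.ordConnected.out hx hz ⟨hxy.le, hyz⟩
  have h := hg.secant_mono hx hy hz hxy.ne' (hxy.trans_le hyz).ne' hyz
  rw [div_le_iff₀ (sub_pos.2 hxy)] at h
  rw [slope_def_field]
  linarith

end Chord

theorem integral_sub_mul_affine (a b c p q : ℝ) :
    ∫ x in a..b, (x - c) * (p + q * (x - c)) =
      p * ((b - c) ^ 2 - (a - c) ^ 2) / 2 + q * ((b - c) ^ 3 - (a - c) ^ 3) / 3 := by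
  have hderiv (x : ℝ) : HasDerivAt (fun x ↦ p * (x - c) ^ 2 / 2 + q * (x - c) ^ 3 / 3)
      ((x - c) * (p + q * (x - c))) x := by
    have h := (hasDerivAt_id x).sub_const c
    refine ((((h.pow 2).const_mul p).div_const 2).add
      (((h.pow 3).const_mul q).div_const 3)).congr_deriv ?_
    simp only [id]
    ring
  rw [integral_eq_sub_of_hasDerivAt (fun x _ ↦ hderiv x)
    (Continuous.intervalIntegrable (by fun_prop) a b)]
  ring

theorem integral_abs_sub_mul_affine {a b c : ℝ} (hac : a ≤ c) (hcb : c ≤ b) (p q : ℝ) :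
    ∫ x in a..b, |x - c| * (p + q * (x - c)) =
      p * ((c - a) ^ 2 + (b - c) ^ 2) / 2 + q * ((b - c) ^ 3 - (c - a) ^ 3) / 3 := by
  have hleft : ∫ x in a..c, |x - c| * (p + q * (x - c)) =
      -∫ x in a..c, (x - c) * (p + q * (x - c)) := by
    rw [← intervalIntegral.integral_neg]
    refine integral_congr fun x hx ↦ ?_
    rw [uIcc_of_le hac] at hx
    simp only [abs_of_nonpos (sub_nonpos.2 hx.2), neg_mul]
  have hright : ∫ x in c..b, |x - c| * (p + q * (x - c)) =
      ∫ x in c..b, (x - c) * (p + q * (x - c)) := by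
    refine integral_congr fun x hx ↦ ?_
    rw [uIcc_of_le hcb] at hx
    simp only [abs_of_nonneg (sub_nonneg.2 hx.1)]
  rw [← integral_add_adjacent_intervals (b := c)
    (Continuous.intervalIntegrable (by fun_prop) a c)
    (Continuous.intervalIntegrable (by fun_prop) c b), hleft, hright,
    integral_sub_mul_affine, integral_sub_mul_affine]
  ring

section Simpson

variable {E : Type*} [NormedAddCommGroup E] [NormedSpace ℝ E]

theorem norm_integral_sub_smul_le_of_norm_le_affine {g : ℝ → E} {a b c p q : ℝ}
    (hac : a ≤ c) (hcb : c ≤ b) (hg : ∀ x ∈ Icc a b, ‖g x‖ ≤ p + q * (x - c)) :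
    ‖∫ x in a..b, (x - c) • g x‖ ≤
      p * ((c - a) ^ 2 + (b - c) ^ 2) / 2 + q * ((b - c) ^ 3 - (c - a) ^ 3) / 3 := by
  rw [← integral_abs_sub_mul_affine hac hcb]
  refine norm_integral_le_of_norm_le (hac.trans hcb) (.of_forall fun x hx ↦ ?_)
    (Continuous.intervalIntegrable (by fun_prop) a b)
  rw [norm_smul, Real.norm_eq_abs]
  exact mul_le_mul_of_nonneg_left (hg x (Ioc_subset_Icc_self hx)) (abs_nonneg _)

theorem integral_sub_smul_deriv [CompleteSpace E] {f f' : ℝ → E} {a b : ℝ} (c : ℝ)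
    (hf : ∀ x ∈ [[a, b]], HasDerivWithinAt f (f' x) [[a, b]] x)
    (hf' : IntervalIntegrable f' volume a b) :
    ∫ x in a..b, (x - c) • f' x = (b - c) • f b - (a - c) • f a - ∫ x in a..b, f x := by
  simpa using integral_smul_deriv_eq_deriv_smul_of_hasDerivWithinAt
    (fun x _ ↦ ((hasDerivAt_id x).sub_const c).hasDerivWithinAt) hf intervalIntegrable_const hf'

/-- Simpson's quadrature rule for `∫ x in a..b, f x` with a single panel, normalized to approximate
the integral rather than the mean value. -/
noncomputable def simpsonRule (f : ℝ → E) (a b : ℝ) : E :=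
  ((b - a) / 6) • (f a + (4 : ℝ) • f ((a + b) / 2) + f b)

theorem simpsonRule_sub_integral_eq [CompleteSpace E] {f f' : ℝ → E} {a b : ℝ}
    (hf : ∀ x ∈ [[a, b]], HasDerivWithinAt f (f' x) [[a, b]] x)
    (hf' : IntervalIntegrable f' volume a b) :
    simpsonRule f a b - ∫ x in a..b, f x =
      (∫ x in a..(a + b) / 2, (x - (5 * a + b) / 6) • f' x) +
        ∫ x in (a + b) / 2..b, (x - (a + 5 * b) / 6) • f' x := by
  have hmid : (a + b) / 2 ∈ [[a, b]] := by
    rcases le_total a b with h | h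
    · exact mem_uIcc_of_le (by linarith) (by linarith)
    · exact mem_uIcc_of_ge (by linarith) (by linarith)
  have hleft : [[a, (a + b) / 2]] ⊆ [[a, b]] := uIcc_subset_uIcc_left hmid
  have hright : [[(a + b) / 2, b]] ⊆ [[a, b]] := uIcc_subset_uIcc_right hmid
  have hfint : IntervalIntegrable f volume a b :=
    ContinuousOn.intervalIntegrable fun x hx ↦ (hf x hx).continuousWithinAt
  rw [integral_sub_smul_deriv _ (fun x hx ↦ (hf x (hleft hx)).mono hleft) (hf'.mono_set hleft),
    integral_sub_smul_deriv _ (fun x hx ↦ (hf x (hright hx)).mono hright) (hf'.mono_set hright),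
    ← integral_add_adjacent_intervals (hfint.mono_set hleft) (hfint.mono_set hright), simpsonRule]
  module

theorem norm_simpsonRule_sub_integral_le_of_convexOn [CompleteSpace E] {f f' : ℝ → E} {a b : ℝ}
    (hab : a ≤ b) (hf : ∀ x ∈ Icc a b, HasDerivWithinAt f (f' x) (Icc a b) x)
    (hf' : IntervalIntegrable f' volume a b) (hconv : ConvexOn ℝ (Icc a b) fun x ↦ ‖f' x‖) :
    ‖simpsonRule f a b - ∫ x in a..b, f x‖ ≤ 5 * (b - a) ^ 2 / 72 * (‖f' a‖ + ‖f' b‖) := by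
  set q := slope (fun x ↦ ‖f' x‖) a b
  have hchord (c : ℝ) : ∀ x ∈ Icc a b, ‖f' x‖ ≤ (‖f' a‖ + q * (c - a)) + q * (x - c) := by
    intro x hx
    have := le_add_slope_mul_sub_of_convexOn hconv (left_mem_Icc.2 hab) (right_mem_Icc.2 hab)
      hx.1 hx.2
    linarith
  have hq : ‖f' b‖ = ‖f' a‖ + q * (b - a) := by
    have h := sub_smul_slope (fun x ↦ ‖f' x‖) a b
    simp only [smul_eq_mul, vsub_eq_sub] at h
    linarith
  have hleft := norm_integral_sub_smul_le_of_norm_le_affine (a := a) (b := (a + b) / 2)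
    (c := (5 * a + b) / 6) (by linarith) (by linarith)
    fun x hx ↦ hchord _ x ⟨hx.1, by linarith [hx.2]⟩
  have hright := norm_integral_sub_smul_le_of_norm_le_affine (a := (a + b) / 2) (b := b)
    (c := (a + 5 * b) / 6) (by linarith) (by linarith)
    fun x hx ↦ hchord _ x ⟨by linarith [hx.1], hx.2⟩
  rw [← uIcc_of_le hab] at hf
  rw [simpsonRule_sub_integral_eq hf hf']
  refine (norm_add_le_of_le hleft hright).trans_eq ?_
  rw [hq]
  ring

end Simpson

theorem abs_simpsonRule_pow_sub_integral_le {a b : ℝ} (hab : a ≤ b) (s : ℕ) :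
    |simpsonRule (fun x ↦ x ^ s) a b - ∫ x in a..b, x ^ s| ≤
      5 * (b - a) ^ 2 / 72 * s * (|a| ^ (s - 1) + |b| ^ (s - 1)) := by
  have norm_deriv (x : ℝ) : ‖(s : ℝ) * x ^ (s - 1)‖ = s * |x| ^ (s - 1) := by simp
  have hconv : ConvexOn ℝ (Icc a b) fun x : ℝ ↦ ‖(s : ℝ) * x ^ (s - 1)‖ := by
    simp only [norm_deriv]
    exact ((convexOn_norm (convex_Icc a b)).pow (fun x _ ↦ norm_nonneg x) (s - 1)).smul
      s.cast_nonneg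
  have h := norm_simpsonRule_sub_integral_le_of_convexOn hab
    (fun x _ ↦ (hasDerivAt_pow s x).hasDerivWithinAt)
    (Continuous.intervalIntegrable (by fun_prop) a b) hconv
  rw [norm_deriv, norm_deriv, Real.norm_eq_abs] at h
  linarith

theorem means_simpson_pow_general {γ δ : ℝ} (hγδ : γ < δ) (s : ℕ) :
    |(1/3) * ((γ^s + δ^s)/2) + (2/3) * ((γ+δ)/2)^s
      - (δ^(s+1) - γ^(s+1)) / (((s:ℝ)+1) * (δ-γ))|
    ≤ (5 * (δ-γ) / 72) * s * (|γ|^(s-1) + |δ|^(s-1)) := by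
  have hlen : 0 < δ - γ := sub_pos.2 hγδ
  have hmean : (1/3) * ((γ^s + δ^s)/2) + (2/3) * ((γ+δ)/2)^s
      - (δ^(s+1) - γ^(s+1)) / (((s:ℝ)+1) * (δ-γ)) =
      (simpsonRule (fun x ↦ x ^ s) γ δ - ∫ x in γ..δ, x ^ s) / (δ - γ) := by
    rw [simpsonRule, integral_pow, smul_eq_mul, smul_eq_mul]
    field_simp
    ring
  rw [hmean, abs_div, abs_of_pos hlen, div_le_iff₀ hlen]
  exact (abs_simpsonRule_pow_sub_integral_le hγδ.le s).trans_eq (by ring)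

theorem means_simpson_pow (γ δ : ℝ) (s : ℕ)
    (hγ : 0 < γ) (hγδ : γ < δ) (hs : 1 ≤ s) :
    |(1/3) * ((γ^s + δ^s)/2) + (2/3) * ((γ+δ)/2)^s
      - (δ^(s+1) - γ^(s+1)) / (((s:ℝ)+1) * (δ-γ))|
    ≤ (5 * (δ-γ) / 72) * s * (γ^(s-1) + δ^(s-1)) := by
  simpa only [abs_of_pos hγ, abs_of_pos (hγ.trans hγδ)] using means_simpson_pow_general hγδ s
end

section
/- Let 0 < γ < δ, s ∈ ℕ with s ≥ 1, and q ≥ 1. Then |(1/3)·A(γ^s, δ^s) + (2/3)·A(γ,δ)^s − L_s(γ,δ)^s| ≤ ((δ−γ)/2)·(5/36)^(1−1/q)·(1/648)^(1/q)·[ (61(s·γ^(s−1))^q + 29(s·δ^(s−1))^q)^(1/q) + (29(s·γ^(s−1))^q + 61(s·δ^(s−1))^q)^(1/q) ]. -/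
open Real

/-!
Integrating by parts against the piecewise linear kernel that vanishes at the points dividing
`[a, b]` in the ratios `1 : 5` and `5 : 1` and jumps at the midpoint expresses the error of
Simpson's rule for `f` through `f'`; the second half of the interval is the first one with the
endpoints exchanged. On each half, Jensen's inequality for the concave function `x ↦ x ^ (1 / q)`,
weighted by the absolute value of the kernel, together with the bound of the convex function
`‖f'‖ ^ q` by its chord, leaves only the moments of the kernel to be computed: after rescaling
to `[0, 1]` they are halves of the constants `5 / 36`, `61 / 648` and `29 / 648`. The theorem is the
case `f x = x ^ s`.
-/

open MeasureTheory Set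

section WeightedJensen

variable {α : Type*} [MeasurableSpace α] {μ : Measure α} {w : α → ℝ}
  {E : Type*} [NormedAddCommGroup E] [NormedSpace ℝ E]

theorem toReal_ofReal_smul_ae_eq (hw : 0 ≤ᵐ[μ] w) (f : α → E) :
    (fun x ↦ (ENNReal.ofReal (w x)).toReal • f x) =ᵐ[μ] fun x ↦ w x • f x := by
  filter_upwards [hw] with x hx
  rw [ENNReal.toReal_ofReal hx]

theorem integral_withDensity_ofReal_eq_integral_smul (hw : 0 ≤ᵐ[μ] w) (hwm : AEMeasurable w μ)
    (f : α → E) :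
    ∫ x, f x ∂μ.withDensity (fun x ↦ ENNReal.ofReal (w x)) = ∫ x, w x • f x ∂μ := by
  rw [integral_withDensity_eq_integral_toReal_smul₀ hwm.ennreal_ofReal
    (.of_forall fun _ ↦ ENNReal.ofReal_lt_top), integral_congr_ae (toReal_ofReal_smul_ae_eq hw f)]

theorem integrable_withDensity_ofReal_iff_integrable_smul (hw : 0 ≤ᵐ[μ] w)
    (hwm : AEMeasurable w μ) {f : α → E} :
    Integrable f (μ.withDensity fun x ↦ ENNReal.ofReal (w x)) ↔
      Integrable (fun x ↦ w x • f x) μ := by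
  rw [integrable_withDensity_iff_integrable_smul₀' hwm.ennreal_ofReal
    (.of_forall fun _ ↦ ENNReal.ofReal_lt_top), integrable_congr (toReal_ofReal_smul_ae_eq hw f)]

theorem inv_integral_mul_integral_mul_le_of_concaveOn [CompleteSpace E]
    {s : Set E} {g : E → ℝ} {f : α → E}
    (hg : ConcaveOn ℝ s g) (hgc : ContinuousOn g s) (hs : IsClosed s)
    (hw : 0 ≤ᵐ[μ] w) (hwi : Integrable w μ) (hw_pos : 0 < ∫ x, w x ∂μ)
    (hfs : ∀ᵐ x ∂μ, f x ∈ s) (hfi : Integrable (fun x ↦ w x • f x) μ)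
    (hgi : Integrable (fun x ↦ w x * g (f x)) μ) :
    (∫ x, w x ∂μ)⁻¹ * ∫ x, w x * g (f x) ∂μ ≤ g ((∫ x, w x ∂μ)⁻¹ • ∫ x, w x • f x ∂μ) := by
  set ν : Measure α := μ.withDensity fun x ↦ ENNReal.ofReal (w x)
  have hwm : AEMeasurable w μ := hwi.aemeasurable
  have mass_ν : ν.real univ = ∫ x, w x ∂μ := by
    simpa using integral_withDensity_ofReal_eq_integral_smul hw hwm fun _ ↦ (1 : ℝ)
  have : IsFiniteMeasure ν := isFiniteMeasure_withDensity_ofReal hwi.2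
  have : NeZero ν := ⟨fun h ↦ by simp [← mass_ν, h] at hw_pos⟩
  have jensen := hg.le_map_average hgc hs ((withDensity_absolutelyContinuous μ _).ae_le hfs)
    ((integrable_withDensity_ofReal_iff_integrable_smul hw hwm).2 hfi)
    ((integrable_withDensity_ofReal_iff_integrable_smul hw hwm).2 hgi)
  simpa only [average_eq, mass_ν, ν, integral_withDensity_ofReal_eq_integral_smul hw hwm,
    smul_eq_mul] using jensen

theorem integral_mul_rpow_le {f : α → ℝ} {r : ℝ} (hr₀ : 0 ≤ r) (hr₁ : r ≤ 1)
    (hw : 0 ≤ᵐ[μ] w) (hwi : Integrable w μ) (hw_pos : 0 < ∫ x, w x ∂μ)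
    (hf : 0 ≤ᵐ[μ] f) (hfi : Integrable (fun x ↦ w x * f x) μ)
    (hfri : Integrable (fun x ↦ w x * f x ^ r) μ) :
    ∫ x, w x * f x ^ r ∂μ ≤ (∫ x, w x ∂μ) ^ (1 - r) * (∫ x, w x * f x ∂μ) ^ r := by
  have hwf : 0 ≤ ∫ x, w x * f x ∂μ :=
    integral_nonneg_of_ae <| by filter_upwards [hw, hf] with x hx hx' using mul_nonneg hx hx'
  have jensen := inv_integral_mul_integral_mul_le_of_concaveOn (concaveOn_rpow hr₀ hr₁)
    (continuousOn_id.rpow_const fun _ _ ↦ .inr hr₀) isClosed_Ici hw hwi hw_pos hf hfi hfri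
  calc ∫ x, w x * f x ^ r ∂μ
      ≤ (∫ x, w x ∂μ) * ((∫ x, w x ∂μ)⁻¹ * ∫ x, w x * f x ∂μ) ^ r :=
        (inv_mul_le_iff₀ hw_pos).1 jensen
    _ = (∫ x, w x ∂μ) ^ (1 - r) * (∫ x, w x * f x ∂μ) ^ r := by
      rw [mul_rpow (inv_nonneg.2 hw_pos.le) hwf, inv_rpow hw_pos.le, rpow_sub hw_pos, rpow_one]
      ring

end WeightedJensen

theorem integral_quadratic (u v c₀ c₁ c₂ : ℝ) :
    ∫ t in u..v, (c₀ + c₁ * t + c₂ * t ^ 2) =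
    c₀ * (v - u) + c₁ * ((v ^ 2 - u ^ 2) / 2) + c₂ * ((v ^ 3 - u ^ 3) / 3) := by
  rw [intervalIntegral.integral_add (Continuous.intervalIntegrable (by fun_prop) u v)
      (Continuous.intervalIntegrable (by fun_prop) u v),
    intervalIntegral.integral_add intervalIntegrable_const
      (Continuous.intervalIntegrable (by fun_prop) u v),
    intervalIntegral.integral_const, intervalIntegral.integral_const_mul,
    intervalIntegral.integral_const_mul, integral_id, integral_pow]
  simp only [smul_eq_mul, Nat.cast_ofNat]
  ring

theorem integral_abs_sub_sixth_mul_convexComb (A B : ℝ) :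
    ∫ t in (0 : ℝ)..1 / 2, |t - 1 / 6| * ((1 - t) * A + t * B) = (61 * A + 29 * B) / 1296 := by
  have hcont : Continuous fun t : ℝ ↦ |t - 1 / 6| * ((1 - t) * A + t * B) := by fun_prop
  have hleft : ∫ t in (0 : ℝ)..1 / 6, |t - 1 / 6| * ((1 - t) * A + t * B) =
      ∫ t in (0 : ℝ)..1 / 6, (A / 6 + (B / 6 - 7 / 6 * A) * t + (A - B) * t ^ 2) := by
    refine intervalIntegral.integral_congr fun t ht ↦ ?_
    rw [uIcc_of_le (by norm_num)] at ht
    simp only [abs_of_nonpos (sub_nonpos.2 ht.2)]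
    ring
  have hright : ∫ t in (1 / 6 : ℝ)..1 / 2, |t - 1 / 6| * ((1 - t) * A + t * B) =
      ∫ t in (1 / 6 : ℝ)..1 / 2, (-A / 6 + (7 / 6 * A - B / 6) * t + (B - A) * t ^ 2) := by
    refine intervalIntegral.integral_congr fun t ht ↦ ?_
    rw [uIcc_of_le (by norm_num)] at ht
    simp only [abs_of_nonneg (sub_nonneg.2 ht.1)]
    ring
  rw [← intervalIntegral.integral_add_adjacent_intervals (b := 1 / 6)
    (hcont.intervalIntegrable ..) (hcont.intervalIntegrable ..), hleft, hright,
    integral_quadratic, integral_quadratic]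
  ring

theorem integral_abs_sub_sixth : ∫ t in (0 : ℝ)..1 / 2, |t - 1 / 6| = 5 / 72 := by
  calc ∫ t in (0 : ℝ)..1 / 2, |t - 1 / 6|
      = ∫ t in (0 : ℝ)..1 / 2, |t - 1 / 6| * ((1 - t) * 1 + t * 1) := by simp
    _ = 5 / 72 := by rw [integral_abs_sub_sixth_mul_convexComb]; norm_num

theorem integral_abs_sub_sixth_mul_convexComb_rpow_le {A B r : ℝ} (hA : 0 ≤ A) (hB : 0 ≤ B)
    (hr₀ : 0 ≤ r) (hr₁ : r ≤ 1) :
    ∫ t in (0 : ℝ)..1 / 2, |t - 1 / 6| * ((1 - t) * A + t * B) ^ r ≤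
      (5 / 36) ^ (1 - r) * (1 / 648) ^ r * (61 * A + 29 * B) ^ r / 2 := by
  have zero_le_half : (0 : ℝ) ≤ 1 / 2 := by norm_num
  have integrable_of_continuous {h : ℝ → ℝ} (hh : Continuous h) :
      Integrable h (volume.restrict (Ioc 0 (1 / 2))) :=
    (hh.intervalIntegrable 0 (1 / 2)).1
  have hnonneg : 0 ≤ᵐ[volume.restrict (Ioc 0 (1 / 2))] fun t : ℝ ↦ (1 - t) * A + t * B := by
    filter_upwards [ae_restrict_mem measurableSet_Ioc] with t ht
    have : 0 ≤ 1 - t := by linarith [ht.2]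
    have : 0 ≤ t := ht.1.le
    positivity
  have jensen := integral_mul_rpow_le hr₀ hr₁
    (.of_forall fun t ↦ abs_nonneg (t - 1 / 6)) (integrable_of_continuous (by fun_prop))
    (by rw [← intervalIntegral.integral_of_le zero_le_half, integral_abs_sub_sixth]; norm_num)
    hnonneg (integrable_of_continuous (by fun_prop))
    (integrable_of_continuous (by fun_prop (disch := simp [hr₀])))
  simp only [← intervalIntegral.integral_of_le zero_le_half, integral_abs_sub_sixth,
    integral_abs_sub_sixth_mul_convexComb] at jensen
  have half_rpow_mul : (1 / 2 : ℝ) ^ (1 - r) * (1 / 2) ^ r = 1 / 2 := by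
    rw [← rpow_add (by norm_num), sub_add_cancel, rpow_one]
  calc _ ≤ (5 / 72 : ℝ) ^ (1 - r) * ((61 * A + 29 * B) / 1296) ^ r := jensen
    _ = (5 / 36 * (1 / 2)) ^ (1 - r) * (1 / 648 * (1 / 2) * (61 * A + 29 * B)) ^ r := by
      norm_num [div_eq_inv_mul]
    _ = ((5 / 36) ^ (1 - r) * (1 / 648) ^ r * (61 * A + 29 * B) ^ r) *
        ((1 / 2) ^ (1 - r) * (1 / 2) ^ r) := by
      rw [mul_rpow (by norm_num) (by norm_num), mul_rpow (by norm_num) (by positivity),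
        mul_rpow (by norm_num) (by norm_num)]
      ring
    _ = _ := by rw [half_rpow_mul, mul_one_div]

theorem le_convexComb_rpow_of_convexOn_rpow {φ : ℝ → ℝ} {a b q t : ℝ} (hq : 0 < q)
    (hφ : ∀ x, 0 ≤ φ x) (hconv : ConvexOn ℝ (uIcc a b) fun x ↦ φ x ^ q) (ht : t ∈ Icc (0 : ℝ) 1) :
    φ (a + (b - a) * t) ≤ ((1 - t) * φ a ^ q + t * φ b ^ q) ^ (1 / q) := by
  have hpt : a + (b - a) * t = (1 - t) • a + t • b := by
    simp only [smul_eq_mul]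
    ring
  have chord_le : φ (a + (b - a) * t) ^ q ≤ (1 - t) * φ a ^ q + t * φ b ^ q := hpt ▸
    hconv.2 left_mem_uIcc right_mem_uIcc (sub_nonneg.2 ht.2) ht.1 (sub_add_cancel 1 t)
  have chord_nonneg : 0 ≤ (1 - t) * φ a ^ q + t * φ b ^ q :=
    (rpow_nonneg (hφ _) q).trans chord_le
  rwa [one_div, le_rpow_inv_iff_of_pos (hφ _) chord_nonneg hq]

section Simpson

variable {E : Type*} [NormedAddCommGroup E] [NormedSpace ℝ E] {f f' : ℝ → E} {a b q : ℝ}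

theorem integral_sub_smul_deriv_half [CompleteSpace E]
    (hf : ∀ x ∈ uIcc a ((a + b) / 2), HasDerivAt f (f' x) x)
    (hf' : IntervalIntegrable f' volume a ((a + b) / 2)) :
    ∫ x in a..(a + b) / 2, (x - (5 * a + b) / 6) • f' x =
      ((b - a) / 6) • (f a + (2 : ℝ) • f ((a + b) / 2)) - ∫ x in a..(a + b) / 2, f x := by
  rw [intervalIntegral.integral_smul_deriv_eq_deriv_smul
    (fun x _ ↦ (hasDerivAt_id' x).sub_const _) hf intervalIntegrable_const hf']
  simp only [one_smul]
  module

theorem integral_sub_smul_half_eq_sq_smul (a b : ℝ) (g : ℝ → E) :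
    ∫ x in a..(a + b) / 2, (x - (5 * a + b) / 6) • g x =
      (b - a) ^ 2 • ∫ t in (0 : ℝ)..1 / 2, (t - 1 / 6) • g (a + (b - a) * t) := by
  rw [pow_two, mul_smul, ← intervalIntegral.integral_smul]
  convert (intervalIntegral.smul_integral_comp_add_mul
    (fun x ↦ (x - (5 * a + b) / 6) • g x) (b - a) a).symm using 3
  · ring
  · ring
  · funext t
    module

theorem norm_integral_sub_smul_half_le_of_convexOn {g : ℝ → E} (hq : 1 ≤ q)
    (hconv : ConvexOn ℝ (uIcc a b) fun x ↦ ‖g x‖ ^ q) :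
    ‖∫ x in a..(a + b) / 2, (x - (5 * a + b) / 6) • g x‖ ≤
      (b - a) ^ 2 / 2 * (5 / 36) ^ (1 - 1 / q) * (1 / 648) ^ (1 / q) *
        (61 * ‖g a‖ ^ q + 29 * ‖g b‖ ^ q) ^ (1 / q) := by
  have hq₀ : 0 < q := by linarith
  have norm_le_integral : ‖∫ t in (0 : ℝ)..1 / 2, (t - 1 / 6) • g (a + (b - a) * t)‖ ≤
      ∫ t in (0 : ℝ)..1 / 2,
        |t - 1 / 6| * ((1 - t) * ‖g a‖ ^ q + t * ‖g b‖ ^ q) ^ (1 / q) := by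
    refine intervalIntegral.norm_integral_le_of_norm_le (by norm_num) (.of_forall fun t ht ↦ ?_)
      (Continuous.intervalIntegrable (by fun_prop (disch := simp [hq₀.le])) ..)
    rw [norm_smul, norm_eq_abs]
    gcongr
    exact le_convexComb_rpow_of_convexOn_rpow hq₀ (fun _ ↦ norm_nonneg _) hconv
      ⟨ht.1.le, by linarith [ht.2]⟩
  rw [integral_sub_smul_half_eq_sq_smul, norm_smul, norm_of_nonneg (sq_nonneg _)]
  calc
    _ ≤ (b - a) ^ 2 * ((5 / 36) ^ (1 - 1 / q) * (1 / 648) ^ (1 / q) *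
        (61 * ‖g a‖ ^ q + 29 * ‖g b‖ ^ q) ^ (1 / q) / 2) := by
      gcongr
      exact norm_le_integral.trans <| integral_abs_sub_sixth_mul_convexComb_rpow_le
        (by positivity) (by positivity) (by positivity) ((div_le_one hq₀).2 hq)
    _ = _ := by ring

theorem simpson_sub_average_eq [CompleteSpace E] (hab : a ≠ b)
    (hf : ∀ x ∈ uIcc a b, HasDerivAt f (f' x) x) (hf' : IntervalIntegrable f' volume a b) :
    (1 / 6 : ℝ) • (f a + (4 : ℝ) • f ((a + b) / 2) + f b) - ⨍ x in a..b, f x =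
      (b - a)⁻¹ • ((∫ x in a..(a + b) / 2, (x - (5 * a + b) / 6) • f' x) -
        ∫ x in b..(b + a) / 2, (x - (5 * b + a) / 6) • f' x) := by
  have hba : b - a ≠ 0 := sub_ne_zero.2 hab.symm
  have left_subset : uIcc a ((a + b) / 2) ⊆ uIcc a b :=
    uIcc_subset_uIcc_left (by grind [mem_uIcc])
  have right_subset : uIcc b ((b + a) / 2) ⊆ uIcc a b :=
    uIcc_subset_uIcc right_mem_uIcc (by grind [mem_uIcc])
  have hfi : IntervalIntegrable f volume a b :=
    ContinuousOn.intervalIntegrable fun x hx ↦ (hf x hx).continuousAt.continuousWithinAt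
  rw [integral_sub_smul_deriv_half (fun x hx ↦ hf x (left_subset hx)) (hf'.mono_set left_subset),
    integral_sub_smul_deriv_half (fun x hx ↦ hf x (right_subset hx)) (hf'.mono_set right_subset),
    interval_average_eq, add_comm b a, ← intervalIntegral.integral_add_adjacent_intervals
      (hfi.mono_set left_subset) (add_comm b a ▸ hfi.mono_set right_subset).symm,
    intervalIntegral.integral_symm b]
  match_scalars <;> field_simp <;> ring

theorem norm_simpson_sub_average_le_of_convexOn [CompleteSpace E] (hab : a ≠ b) (hq : 1 ≤ q)
    (hf : ∀ x ∈ uIcc a b, HasDerivAt f (f' x) x) (hf' : IntervalIntegrable f' volume a b)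
    (hconv : ConvexOn ℝ (uIcc a b) fun x ↦ ‖f' x‖ ^ q) :
    ‖(1 / 6 : ℝ) • (f a + (4 : ℝ) • f ((a + b) / 2) + f b) - ⨍ x in a..b, f x‖ ≤
      |b - a| / 2 * (5 / 36) ^ (1 - 1 / q) * (1 / 648) ^ (1 / q) *
        ((61 * ‖f' a‖ ^ q + 29 * ‖f' b‖ ^ q) ^ (1 / q) +
          (29 * ‖f' a‖ ^ q + 61 * ‖f' b‖ ^ q) ^ (1 / q)) := by
  have hba : 0 < |b - a| := abs_pos.2 (sub_ne_zero.2 hab.symm)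
  have left_le := norm_integral_sub_smul_half_le_of_convexOn hq hconv
  have right_le := norm_integral_sub_smul_half_le_of_convexOn hq (uIcc_comm a b ▸ hconv)
  rw [← sq_abs] at left_le
  rw [← sq_abs, abs_sub_comm, add_comm (61 * _)] at right_le
  rw [simpson_sub_average_eq hab hf hf', norm_smul, norm_inv, norm_eq_abs,
    inv_mul_le_iff₀ hba]
  refine (norm_sub_le_of_le left_le right_le).trans_eq ?_
  ring

end Simpson

theorem convexOn_rpow_comp {F : Type*} [AddCommMonoid F] [Module ℝ F] {s : Set F} {g : F → ℝ}
    {q : ℝ} (hq : 1 ≤ q) (hg : ConvexOn ℝ s g) (hg₀ : ∀ x ∈ s, 0 ≤ g x) :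
    ConvexOn ℝ s fun x ↦ g x ^ q := by
  refine ⟨hg.1, fun x hx y hy a b ha hb hab ↦ ?_⟩
  calc g (a • x + b • y) ^ q
      ≤ (a • g x + b • g y) ^ q :=
        rpow_le_rpow (hg₀ _ (hg.1 hx hy ha hb hab)) (hg.2 hx hy ha hb hab) (by linarith)
    _ ≤ a • g x ^ q + b • g y ^ q := (convexOn_rpow hq).2 (hg₀ x hx) (hg₀ y hy) ha hb hab

theorem convexOn_norm_const_mul_pow (c : ℝ) (n : ℕ) :
    ConvexOn ℝ univ fun x : ℝ ↦ ‖c * x ^ n‖ := by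
  simp only [norm_mul, norm_pow]
  exact (convexOn_univ_norm.pow (fun _ _ ↦ norm_nonneg _) n).smul (norm_nonneg c)

theorem means_simpson_pow_power_mean_general {γ δ q : ℝ} (s : ℕ) (hγδ : γ < δ) (hq : 1 ≤ q) :
    |(1 / 3) * ((γ ^ s + δ ^ s) / 2) + (2 / 3) * ((γ + δ) / 2) ^ s -
        (δ ^ (s + 1) - γ ^ (s + 1)) / (((s : ℝ) + 1) * (δ - γ))| ≤
      (δ - γ) / 2 * (5 / 36) ^ (1 - 1 / q) * (1 / 648) ^ (1 / q) *
        ((61 * (s * |γ| ^ (s - 1)) ^ q + 29 * (s * |δ| ^ (s - 1)) ^ q) ^ (1 / q) +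
          (29 * (s * |γ| ^ (s - 1)) ^ q + 61 * (s * |δ| ^ (s - 1)) ^ q) ^ (1 / q)) := by
  have simpson := norm_simpson_sub_average_le_of_convexOn hγδ.ne hq
    (fun x _ ↦ hasDerivAt_pow s x) (Continuous.intervalIntegrable (by fun_prop) γ δ)
    ((convexOn_rpow_comp hq (convexOn_norm_const_mul_pow s (s - 1)) fun _ _ ↦ norm_nonneg _).subset
      (subset_univ _) (convex_uIcc γ δ))
  have average_pow :
      ⨍ x in γ..δ, x ^ s = (δ ^ (s + 1) - γ ^ (s + 1)) / (((s : ℝ) + 1) * (δ - γ)) := by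
    rw [interval_average_eq_div, integral_pow, div_div]
  rw [average_pow] at simpson
  simp only [norm_mul, norm_pow, norm_eq_abs, Nat.abs_cast, smul_eq_mul,
    abs_of_pos (sub_pos.2 hγδ)] at simpson
  convert simpson using 2
  ring

theorem means_simpson_pow_power_mean (γ δ q : ℝ) (s : ℕ)
    (hγ : 0 < γ) (hγδ : γ < δ) (hs : 1 ≤ s) (hq : 1 ≤ q) :
    |(1/3) * ((γ^s + δ^s)/2) + (2/3) * ((γ+δ)/2)^s
      - (δ^(s+1) - γ^(s+1)) / (((s:ℝ)+1) * (δ-γ))|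
    ≤ ((δ-γ)/2) * ((5/36 : ℝ)) ^ (1 - 1/q) * ((1/648 : ℝ)) ^ (1/q) *
        ((61 * ((s:ℝ) * γ^(s-1)) ^ q + 29 * ((s:ℝ) * δ^(s-1)) ^ q) ^ (1/q)
          + (29 * ((s:ℝ) * γ^(s-1)) ^ q + 61 * ((s:ℝ) * δ^(s-1)) ^ q) ^ (1/q)) := by
  simpa only [abs_of_pos hγ, abs_of_pos (hγ.trans hγδ)] using
    means_simpson_pow_power_mean_general s hγδ hq
end

section
/- Let 0 < α < β. Then |(1/3)·A(α,β) + (2/3)·G(α,β) − L(α,β)| ≤ (ln β − ln α)·(5/36)·A(α,β). -/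
/-!
With `G = √(αβ)` and `t = (log β - log α) / 2`, the arithmetic mean is `G cosh t` and the
logarithmic mean is `G sinh t / t`. The quantity inside the absolute value is nonnegative because
`sinh t / t ≤ (cosh t + 2) / 3`. For the upper bound, `1 ≤ sinh t / t` gives `G ≤ L`, which leaves
a third of `A - G = 2 G sinh² (t / 2)`, and `tanh (t / 2) ≤ t / 2` bounds `A - G` by
`G t sinh t / 2 = (log β - log α) (β - α) / 8`.
-/

open Real Set

theorem nonneg_of_hasDerivAt_nonneg {f f' : ℝ → ℝ} {a x : ℝ} (hfa : f a = 0)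
    (hf : ∀ y, a ≤ y → HasDerivAt f (f' y) y) (hf' : ∀ y, a < y → 0 ≤ f' y) (hx : a ≤ x) :
    0 ≤ f x := by
  have hmono : MonotoneOn f (Ici a) := by
    refine monotoneOn_of_hasDerivWithinAt_nonneg (convex_Ici a)
      (fun y hy ↦ (hf y hy).continuousAt.continuousWithinAt)
      (fun y hy ↦ (hf y (interior_subset hy)).hasDerivWithinAt) fun y hy ↦ hf' y ?_
    rwa [interior_Ici] at hy
  exact hfa ▸ hmono self_mem_Ici hx hx

section Hyperbolic

variable {t : ℝ}

theorem sinh_le_self_mul_cosh (ht : 0 ≤ t) : sinh t ≤ t * cosh t := by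
  have hderiv (y : ℝ) : HasDerivAt (fun y ↦ y * cosh y - sinh y) (y * sinh y) y :=
    (((hasDerivAt_id y).mul (hasDerivAt_cosh y)).sub (hasDerivAt_sinh y)).congr_deriv (by simp)
  have hnonneg := nonneg_of_hasDerivAt_nonneg (by simp) (fun y _ ↦ hderiv y)
    (fun y hy ↦ mul_nonneg hy.le (sinh_nonneg_iff.2 hy.le)) ht
  exact sub_nonneg.1 hnonneg

theorem cosh_sub_one_eq_two_mul_sinh_half_sq (t : ℝ) : cosh t - 1 = 2 * sinh (t / 2) ^ 2 := by
  have hcosh : cosh t = cosh (t / 2) ^ 2 + sinh (t / 2) ^ 2 := by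
    rw [← cosh_two_mul, mul_div_cancel₀ t two_ne_zero]
  rw [hcosh, cosh_sq]
  ring

theorem two_mul_cosh_sub_one_le_self_mul_sinh (t : ℝ) : 2 * (cosh t - 1) ≤ t * sinh t := by
  wlog ht : 0 ≤ t generalizing t
  · simpa using this (-t) (by linarith)
  have hsinh : sinh t = 2 * sinh (t / 2) * cosh (t / 2) := by
    rw [← sinh_two_mul, mul_div_cancel₀ t two_ne_zero]
  have hhalf : 0 ≤ t / 2 := by positivity
  calc 2 * (cosh t - 1) = 4 * sinh (t / 2) * sinh (t / 2) := by
        rw [cosh_sub_one_eq_two_mul_sinh_half_sq]; ring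
    _ ≤ 4 * sinh (t / 2) * (t / 2 * cosh (t / 2)) :=
        mul_le_mul_of_nonneg_left (sinh_le_self_mul_cosh hhalf)
          (mul_nonneg zero_le_four (sinh_nonneg_iff.2 hhalf))
    _ = t * sinh t := by rw [hsinh]; ring

theorem three_mul_sinh_le_self_mul_cosh_add_two (ht : 0 ≤ t) :
    3 * sinh t ≤ t * (cosh t + 2) := by
  have hderiv (y : ℝ) : HasDerivAt (fun y ↦ y * (cosh y + 2) - 3 * sinh y)
      (y * sinh y - 2 * (cosh y - 1)) y :=
    (((hasDerivAt_id y).mul ((hasDerivAt_cosh y).add_const 2)).sub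
      ((hasDerivAt_sinh y).const_mul 3)).congr_deriv (by simp only [id_eq]; ring)
  have hnonneg := nonneg_of_hasDerivAt_nonneg (by simp) (fun y _ ↦ hderiv y)
    (fun y _ ↦ sub_nonneg.2 (two_mul_cosh_sub_one_le_self_mul_sinh y)) ht
  exact sub_nonneg.1 hnonneg

theorem one_le_sinh_div_self (ht : t ≠ 0) : 1 ≤ sinh t / t := by
  wlog hpos : 0 < t generalizing t
  · simpa using this (neg_ne_zero.2 ht) (neg_pos.2 (ht.lt_of_le (not_lt.1 hpos)))
  exact (one_le_div₀ hpos).2 (self_le_sinh_iff.2 hpos.le)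

theorem sinh_div_self_le_cosh_add_two_div_three (ht : t ≠ 0) : sinh t / t ≤ (cosh t + 2) / 3 := by
  wlog hpos : 0 < t generalizing t
  · simpa using this (neg_ne_zero.2 ht) (neg_pos.2 (ht.lt_of_le (not_lt.1 hpos)))
  rw [div_le_div_iff₀ hpos three_pos]
  linarith [three_mul_sinh_le_self_mul_cosh_add_two hpos.le]

end Hyperbolic

/-- The logarithmic mean of two distinct positive reals. On the diagonal it takes the junk value
`0`, not the limit `α`. -/
noncomputable def logMean (α β : ℝ) : ℝ :=
  (β - α) / (log β - log α)

section Means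

variable {α β : ℝ}

theorem sqrt_mul_eq_exp (hα : 0 < α) (hβ : 0 < β) : √(α * β) = exp ((log α + log β) / 2) := by
  rw [← log_mul hα.ne' hβ.ne', exp_half, exp_log (mul_pos hα hβ)]

theorem sqrt_mul_mul_exp_half_log_sub (hα : 0 < α) (hβ : 0 < β) :
    √(α * β) * exp ((log β - log α) / 2) = β := by
  have hsum : (log α + log β) / 2 + (log β - log α) / 2 = log β := by ring
  rw [sqrt_mul_eq_exp hα hβ, ← exp_add, hsum, exp_log hβ]

theorem sqrt_mul_mul_exp_neg_half_log_sub (hα : 0 < α) (hβ : 0 < β) :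
    √(α * β) * exp (-((log β - log α) / 2)) = α := by
  rw [← neg_div, neg_sub, mul_comm α β, sqrt_mul_mul_exp_half_log_sub hβ hα]

theorem half_add_eq_sqrt_mul_cosh (hα : 0 < α) (hβ : 0 < β) :
    (α + β) / 2 = √(α * β) * cosh ((log β - log α) / 2) := by
  rw [cosh_eq]
  linarith [sqrt_mul_mul_exp_half_log_sub hα hβ, sqrt_mul_mul_exp_neg_half_log_sub hα hβ]

theorem half_sub_eq_sqrt_mul_sinh (hα : 0 < α) (hβ : 0 < β) :
    (β - α) / 2 = √(α * β) * sinh ((log β - log α) / 2) := by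
  rw [sinh_eq]
  linarith [sqrt_mul_mul_exp_half_log_sub hα hβ, sqrt_mul_mul_exp_neg_half_log_sub hα hβ]

theorem logMean_eq_sqrt_mul_sinh_div (hα : 0 < α) (hβ : 0 < β) :
    logMean α β =
      √(α * β) * (sinh ((log β - log α) / 2) / ((log β - log α) / 2)) := by
  rw [logMean, ← mul_div_assoc, ← half_sub_eq_sqrt_mul_sinh hα hβ,
    div_div_div_cancel_right₀ two_ne_zero]

theorem half_log_sub_ne_zero (hα : 0 < α) (hβ : 0 < β) (hne : α ≠ β) :
    (log β - log α) / 2 ≠ 0 :=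
  div_ne_zero (sub_ne_zero.2 fun h ↦ hne (log_injOn_pos hα hβ h.symm)) two_ne_zero

theorem sqrt_mul_le_logMean (hα : 0 < α) (hβ : 0 < β) (hne : α ≠ β) :
    √(α * β) ≤ logMean α β := by
  rw [logMean_eq_sqrt_mul_sinh_div hα hβ]
  exact le_mul_of_one_le_right (sqrt_nonneg _)
    (one_le_sinh_div_self (half_log_sub_ne_zero hα hβ hne))

theorem logMean_le_third_arith_add_two_thirds_geom (hα : 0 < α) (hβ : 0 < β) (hne : α ≠ β) :
    logMean α β ≤ (1 / 3) * ((α + β) / 2) + (2 / 3) * √(α * β) := by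
  rw [logMean_eq_sqrt_mul_sinh_div hα hβ, half_add_eq_sqrt_mul_cosh hα hβ]
  have hratio := sinh_div_self_le_cosh_add_two_div_three (half_log_sub_ne_zero hα hβ hne)
  exact (mul_le_mul_of_nonneg_left hratio (sqrt_nonneg _)).trans_eq (by ring)

theorem half_add_sub_sqrt_mul_le (hα : 0 < α) (hβ : 0 < β) :
    (α + β) / 2 - √(α * β) ≤ (log β - log α) * (β - α) / 8 := by
  set t := (log β - log α) / 2 with ht
  calc (α + β) / 2 - √(α * β) = √(α * β) * (2 * (cosh t - 1)) / 2 := by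
        rw [half_add_eq_sqrt_mul_cosh hα hβ]; ring
    _ ≤ √(α * β) * (t * sinh t) / 2 := by
        gcongr √(α * β) * ?_ / 2; exact two_mul_cosh_sub_one_le_self_mul_sinh t
    _ = t * ((β - α) / 2) / 2 := by rw [half_sub_eq_sqrt_mul_sinh hα hβ]; ring
    _ = (log β - log α) * (β - α) / 8 := by rw [ht]; ring

theorem means_arith_geom_log_general (hα : 0 < α) (hβ : 0 < β) (hne : α ≠ β) :
    |(1 / 3) * ((α + β) / 2) + (2 / 3) * √(α * β) - (β - α) / (log β - log α)|
      ≤ (log β - log α) * (β - α) / 24 := by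
  change |_ - logMean α β| ≤ _
  rw [abs_of_nonneg (sub_nonneg.2 (logMean_le_third_arith_add_two_thirds_geom hα hβ hne))]
  linarith [sqrt_mul_le_logMean hα hβ hne, half_add_sub_sqrt_mul_le hα hβ]

end Means

theorem means_arith_geom_log (α β : ℝ) (hα : 0 < α) (hαβ : α < β) :
    |(1/3) * ((α+β)/2) + (2/3) * Real.sqrt (α*β) - (β-α)/(Real.log β - Real.log α)|
    ≤ (Real.log β - Real.log α) * (5/36) * ((α+β)/2) := by
  refine (means_arith_geom_log_general hα (hα.trans hαβ) hαβ.ne).trans ?_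
  nlinarith [log_lt_log hα hαβ]
end
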